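/- Let occ(σ) be the number of occurrences in σ of the mesh pattern Nr. 27, where an occurrence is a pair of indices i < j with a = σ_i < σ_j = b such that: every element before position i has value less than a; every element strictly between positions i and j has value greater than b; and every element after position j has value strictly between a and b. Let E(t,u) = Σ_{n≥0} t^n Σ_{σ∈K_n} u^{occ(σ)} and set D = 1 + t(1+u+ut) + t(1−u)·A(t). Then (1+t)·D·E(t,u) = ((1+t)·D + t^2(1−u)·(D − A(t)^2))·A(t) as formal power series in t over ℚ[u]. -/

import Mathlib

/-- A permutation of `{0, …, n-1}` is a *king permutation* if consecutive entries
differ by more than 1 in absolute value. -/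
def IsKing {n : ℕ} (σ : Equiv.Perm (Fin n)) : Prop :=
  ∀ i : Fin n, ∀ h : (i : ℕ) + 1 < n,
    1 < |((σ ⟨(i : ℕ) + 1, h⟩ : ℕ) : ℤ) - ((σ i : ℕ) : ℤ)|

/-- `kingCount n = A_n`, the number of king permutations of length `n`. -/
noncomputable def kingCount (n : ℕ) : ℕ :=
  Nat.card {σ : Equiv.Perm (Fin n) // IsKing σ}

/-- `A(t)` regarded as a power series over `ℚ[u]` (constant-polynomial coefficients). -/
noncomputable def kingAu : PowerSeries (Polynomial ℚ) :=
  PowerSeries.mk fun n => (kingCount n : Polynomial ℚ)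

/-- `u` viewed as a constant power series over `ℚ[u]`. -/
noncomputable def U : PowerSeries (Polynomial ℚ) :=
  PowerSeries.C Polynomial.X

/-- `t`, the power series variable. -/
noncomputable def T : PowerSeries (Polynomial ℚ) :=
  PowerSeries.X

/-- An occurrence of the mesh pattern Nr. 27 in `σ`. -/
def OccP {n : ℕ} (σ : Equiv.Perm (Fin n)) (i j : Fin n) : Prop :=
  i < j ∧ σ i < σ j ∧
    (∀ k : Fin n, k < i → σ k < σ i) ∧
    (∀ k : Fin n, i < k → k < j → σ j < σ k) ∧
    (∀ k : Fin n, j < k → σ i < σ k ∧ σ k < σ j)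

/-- The number of occurrences of the mesh pattern Nr. 27 in `σ`. -/
noncomputable def occP {n : ℕ} (σ : Equiv.Perm (Fin n)) : ℕ :=
  Nat.card {p : Fin n × Fin n // OccP σ p.1 p.2}

-- `E(t,u) = Σ_{n≥0} t^n Σ_{σ∈K_n} u^{occ(σ)}`, a power series in `t` over `ℚ[u]`.
open Classical in
noncomputable def Etu : PowerSeries (Polynomial ℚ) :=
  PowerSeries.mk fun n =>
    ∑ σ : Equiv.Perm (Fin n),
      if IsKing σ then (Polynomial.X : Polynomial ℚ) ^ occP σ else 0

/-!
If `(a, b)` are the letters of an occurrence, then `a` is a strong point, so the permutation is a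
direct sum `x ⊕ 1 ⊕ y`, and `b` is a skew strong point of `y`. No word of length at least two has
both a strong and a skew strong point; hence `a` is the same for all occurrences, and the
occurrences correspond to the skew strong points of `y`. The permutation is king iff `x ⊕ 1` and
`1 ⊕ y` are. With `L(t)` counting the admissible `x` and `S(t, u)` the admissible `y` by skew strong
points, this gives `E(t, u) - A(t) = t L(t) (S(t, u) - S(t, 1))`.

Deleting a final maximum gives `A = (1 + t) L`, and reversal expresses `S` through the generating
function `F(t, u)` of king permutations by strong points. Finally `F` is found by splitting at the
last strong point: with `G` the refinement of `L` by strong points and `N` counting the king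
permutations without strong points, `F = (1 + u t) G = N + u t G N`, and eliminating `N` between
`u` and `1` yields `D F = (1 + t) (1 + u t) A`.
-/

open PowerSeries

section SplitPoints

variable {α β : Type*} {r s : α → α → Prop} {w : List α} {a b c : α}

open Classical in
/-- The split points of a word with respect to a relation `r`: the letters that stand in the
relation `r`, in reading order, to all other letters. For `(· < ·)` these are the *strong points*
of a permutation, for `(· > ·)` its *skew strong points*. -/
noncomputable def splitPoints (r : α → α → Prop) (w : List α) : Finset α :=
  {a ∈ w.toFinset | w.Pairwise fun x y => x = a ∨ y = a → r x y}

lemma mem_splitPoints :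
    a ∈ splitPoints r w ↔ a ∈ w ∧ w.Pairwise fun x y => x = a ∨ y = a → r x y := by
  simp [splitPoints]

@[simp] lemma splitPoints_nil : splitPoints r ([] : List α) = ∅ := by
  simp [splitPoints]

@[simp] lemma splitPoints_singleton : splitPoints r [a] = {a} := by
  ext; simp [mem_splitPoints]

lemma mem_splitPoints_of_sublist {w' : List α} (h : a ∈ splitPoints r w) (hw : w'.Sublist w)
    (ha : a ∈ w') : a ∈ splitPoints r w' :=
  mem_splitPoints.2 ⟨ha, (mem_splitPoints.1 h).2.sublist hw⟩

lemma splitPoints_reverse : splitPoints r w.reverse = splitPoints (Function.swap r) w := by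
  ext a
  simp only [mem_splitPoints, List.mem_reverse, List.pairwise_reverse, Function.swap, or_comm]

open Classical in
lemma splitPoints_map {s : β → β → Prop} {f : α → β} (hf : Function.Injective f)
    (hr : ∀ x y, s (f x) (f y) ↔ r x y) :
    splitPoints s (w.map f) = (splitPoints r w).image f := by
  ext b
  simp only [Finset.mem_image, mem_splitPoints, List.mem_map, List.pairwise_map, hr]
  constructor
  · rintro ⟨⟨a, ha, rfl⟩, h⟩
    exact ⟨a, ⟨ha, by simpa only [hf.eq_iff] using h⟩, rfl⟩
  · rintro ⟨a, ⟨ha, h⟩, rfl⟩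
    exact ⟨⟨a, ha, rfl⟩, by simpa only [hf.eq_iff] using h⟩

open Classical in
lemma splitPoints_append [Std.Irrefl r] {w' : List α} (h : ∀ x ∈ w, ∀ y ∈ w', r x y) :
    splitPoints r (w ++ w') = splitPoints r w ∪ splitPoints r w' := by
  have pairwise_of_notMem {a : α} {v : List α} (ha : a ∉ v) :
      v.Pairwise fun x y => x = a ∨ y = a → r x y :=
    List.pairwise_of_forall_mem_list fun x hx y hy => by grind
  have disjoint {a : α} (ha : a ∈ w) (ha' : a ∈ w') : False := Std.Irrefl.irrefl a (h a ha a ha')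
  ext a
  simp only [Finset.mem_union, mem_splitPoints, List.mem_append, List.pairwise_append]
  constructor
  · tauto
  · rintro (⟨ha, hw⟩ | ⟨ha, hw⟩)
    · exact ⟨.inl ha, hw, pairwise_of_notMem (disjoint ha), fun x hx y hy _ => h x hx y hy⟩
    · exact ⟨.inr ha, pairwise_of_notMem (disjoint · ha), hw, fun x hx y hy _ => h x hx y hy⟩

lemma eq_of_mem_splitPoints (hrs : ∀ x y, r x y → ¬ s x y) (ha : a ∈ splitPoints r w)
    (hb : b ∈ splitPoints s w) (hc : c ∈ w) : c = a := by
  rw [mem_splitPoints] at ha hb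
  let R (x y : α) : Prop := ¬ ((x = a ∨ y = a) ∧ (x = b ∨ y = b))
  have hR : w.Pairwise R :=
    (ha.2.and hb.2).imp fun h ⟨hxa, hxb⟩ => hrs _ _ (h.1 hxa) (h.2 hxb)
  have : Std.Symm R := ⟨fun x y => by simp only [R]; tauto⟩
  have hab : a = b := by
    by_contra hne
    exact hR.forall ha.1 hb.1 hne ⟨.inl rfl, .inr rfl⟩
  by_contra hne
  exact hR.forall hc ha.1 hne ⟨.inr rfl, .inr hab⟩

lemma exists_eq_append_of_mem_splitPoints (h : a ∈ splitPoints r w) :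
    ∃ v v', w = v ++ a :: v' ∧ (∀ x ∈ v, r x a) ∧ ∀ y ∈ v', r a y := by
  obtain ⟨ha, hw⟩ := mem_splitPoints.1 h
  obtain ⟨v, v', rfl⟩ := List.append_of_mem ha
  rw [List.pairwise_append, List.pairwise_cons] at hw
  exact ⟨v, v', rfl, fun x hx => hw.2.2 x hx a (by simp) (.inr rfl),
    fun y hy => hw.2.1.1 y hy (.inl rfl)⟩

lemma mem_splitPoints_filter_ofFn {n : ℕ} {f : Fin n → α} (hf : Function.Injective f)
    (p : α → Bool) (i : Fin n) :
    f i ∈ splitPoints r ((List.ofFn f).filter p) ↔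
      p (f i) ∧ (∀ k < i, p (f k) → r (f k) (f i)) ∧ ∀ k, i < k → p (f k) → r (f i) (f k) := by
  simp only [mem_splitPoints, List.mem_filter, List.mem_ofFn, exists_apply_eq_apply, true_and,
    List.pairwise_filter, List.pairwise_ofFn, hf.eq_iff]
  grind

lemma mem_splitPoints_ofFn {n : ℕ} {f : Fin n → α} (hf : Function.Injective f) (i : Fin n) :
    f i ∈ splitPoints r (List.ofFn f) ↔
      (∀ k < i, r (f k) (f i)) ∧ ∀ k, i < k → r (f i) (f k) := by
  simpa using mem_splitPoints_filter_ofFn (r := r) hf (fun _ => true) i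

end SplitPoints

/-- The occurrences of the mesh pattern Nr. 27 in a word, recorded by their letters `a < b`: the
letter `a` is a strong point, and `b` is a skew strong point of the subword of letters
exceeding `a`. -/
noncomputable def occurrences (w : List ℕ) : Finset (Σ _ : ℕ, ℕ) :=
  (splitPoints (· < ·) w).sigma fun a => splitPoints (· > ·) (w.filter (a < ·))

lemma mem_occurrences {w : List ℕ} {a b : ℕ} :
    ⟨a, b⟩ ∈ occurrences w ↔
      a ∈ splitPoints (· < ·) w ∧ b ∈ splitPoints (· > ·) (w.filter (a < ·)) :=
  Finset.mem_sigma

lemma occurrence_fst_le {w : List ℕ} {a b a' b' : ℕ} (h : ⟨a, b⟩ ∈ occurrences w)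
    (h' : ⟨a', b'⟩ ∈ occurrences w) : a' ≤ a := by
  obtain ⟨-, hb⟩ := mem_occurrences.1 h
  obtain ⟨ha', hb'⟩ := mem_occurrences.1 h'
  have hb'w := (mem_splitPoints.1 hb').1
  rw [List.mem_filter, decide_eq_true_iff] at hb'w
  by_contra! hlt
  have mem_filter {c : ℕ} (hc : c ∈ w) (hac : a < c) : c ∈ w.filter (a < ·) :=
    List.mem_filter.2 ⟨hc, decide_eq_true hac⟩
  have ha'_mem := mem_filter (mem_splitPoints.1 ha').1 hlt
  have hb'_eq : b' = a' :=
    eq_of_mem_splitPoints (fun _ _ => Nat.lt_asymm)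
      (mem_splitPoints_of_sublist ha' List.filter_sublist ha'_mem) hb
      (mem_filter hb'w.1 (hlt.trans hb'w.2))
  exact hb'w.2.ne' hb'_eq

lemma occurrence_fst_unique {w : List ℕ} {a b a' b' : ℕ} (h : ⟨a, b⟩ ∈ occurrences w)
    (h' : ⟨a', b'⟩ ∈ occurrences w) : a = a' :=
  (occurrence_fst_le h' h).antisymm (occurrence_fst_le h h')

section Glue

/-- Words of permutations of `{0, …, n-1}`, with `n` the length of the word. -/
def IsPermWord (w : List ℕ) : Prop := w.Perm (List.range w.length)

/-- The direct sum `x ⊕ 1 ⊕ y`: the words `x` and `y` joined by a strong point. -/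
def glue (x y : List ℕ) : List ℕ := x ++ x.length :: y.map (· + (x.length + 1))

variable {w x y x' y' : List ℕ}

lemma isPermWord_nil : IsPermWord [] := .nil

lemma IsPermWord.nodup (h : IsPermWord w) : w.Nodup := h.nodup_iff.2 List.nodup_range

lemma IsPermWord.mem_iff (h : IsPermWord w) {a : ℕ} : a ∈ w ↔ a < w.length := by
  rw [List.Perm.mem_iff h, List.mem_range]

lemma IsPermWord.reverse (h : IsPermWord w) : IsPermWord w.reverse := by
  rw [IsPermWord, List.length_reverse]
  exact w.reverse_perm.trans h

@[simp] lemma length_glue : (glue x y).length = x.length + y.length + 1 := by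
  simp only [glue, List.length_append, List.length_cons, List.length_map]
  omega

lemma isPermWord_glue : IsPermWord (glue x y) ↔ IsPermWord x ∧ IsPermWord y := by
  have range_split : List.range (glue x y).length = List.range x.length ++ x.length ::
      (List.range y.length).map (· + (x.length + 1)) := by
    rw [length_glue, add_assoc, List.range_add, List.range_succ_eq_map, List.map_cons, List.map_map]
    congr 3
    funext k
    simp only [Function.comp_apply]
    omega
  have perm_shift :
      (y.map (· + (x.length + 1))).Perm ((List.range y.length).map (· + (x.length + 1))) ↔
        IsPermWord y := List.map_perm_map_iff (add_left_injective _)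
  rw [IsPermWord, range_split, glue]
  constructor
  · intro h
    have range_subset : List.range x.length ⊆ x := fun k hk => by
      have := h.symm.subset (List.mem_append_left _ hk)
      grind
    have hx : x.Perm (List.range x.length) :=
      ((List.subperm_of_subset List.nodup_range range_subset).perm_of_length_le (by simp)).symm
    have h' := (List.perm_append_left_iff _).1 ((hx.symm.append_right _).trans h)
    exact ⟨hx, perm_shift.1 h'.cons_inv⟩
  · rintro ⟨hx, hy⟩
    exact List.Perm.append hx ((perm_shift.2 hy).cons _)

lemma glue_inj (h : glue x y = glue x' y') (hl : x.length = x'.length) : x = x' ∧ y = y' := by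
  obtain ⟨rfl, hy⟩ := List.append_inj h hl
  exact ⟨rfl, List.map_injective_iff.2 (add_left_injective _) (List.cons_inj_right _ |>.1 hy)⟩

lemma splitPoints_glue (hx : IsPermWord x) :
    splitPoints (· < ·) (glue x y) = splitPoints (· < ·) x ∪
      insert x.length ((splitPoints (· < ·) y).image (· + (x.length + 1))) := by
  rw [glue, ← List.singleton_append, splitPoints_append, splitPoints_append,
    splitPoints_map (r := (· < ·)) (add_left_injective _) (by simp), splitPoints_singleton,
    Finset.insert_eq]
  · congr!
  · grind
  · intro a ha
    rw [hx.mem_iff] at ha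
    grind

lemma length_mem_splitPoints_glue (hx : IsPermWord x) :
    x.length ∈ splitPoints (· < ·) (glue x y) := by
  simp [splitPoints_glue hx]

lemma splitPoints_glue_of_eq_empty (hx : IsPermWord x) (hy : splitPoints (· < ·) y = ∅) :
    splitPoints (· < ·) (glue x y) = insert x.length (splitPoints (· < ·) x) := by
  rw [splitPoints_glue hx, hy, Finset.image_empty, Finset.union_insert, Finset.union_empty]

lemma zero_mem_splitPoints_cons (h : IsPermWord (0 :: y)) :
    0 ∈ splitPoints (· < ·) (0 :: y) := by
  have pos_of_mem (b : ℕ) (hb : b ∈ y) : 0 < b :=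
    Nat.pos_of_ne_zero fun h0 => (List.nodup_cons.1 h.nodup).1 (h0 ▸ hb)
  rw [← List.singleton_append, splitPoints_append (by simpa using pos_of_mem)]
  simp

lemma lt_length_of_mem_splitPoints {a : ℕ} (hw : IsPermWord w) (ha : a ∈ splitPoints (· < ·) w) :
    a < w.length :=
  hw.mem_iff.1 (mem_splitPoints.1 ha).1

lemma card_splitPoints_glue_of_eq_empty (hx : IsPermWord x) (hy : splitPoints (· < ·) y = ∅) :
    (splitPoints (· < ·) (glue x y)).card = (splitPoints (· < ·) x).card + 1 := by
  rw [splitPoints_glue_of_eq_empty hx hy, Finset.card_insert_of_notMem fun h =>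
    (lt_length_of_mem_splitPoints hx h).false]

lemma exists_eq_glue_of_mem_splitPoints {a : ℕ} (hw : IsPermWord w)
    (ha : a ∈ splitPoints (· < ·) w) : ∃ x y, x.length = a ∧ w = glue x y := by
  obtain ⟨x, v, rfl, hx, hv⟩ := exists_eq_append_of_mem_splitPoints ha
  have x_perm : x.Perm (List.range a) := by
    refine (List.perm_ext_iff_of_nodup hw.nodup.of_append_left List.nodup_range).2 fun k => ?_
    have := lt_length_of_mem_splitPoints hw ha
    have := hw.mem_iff (a := k)
    grind
  have length_x : x.length = a := by simpa using x_perm.length_eq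
  refine ⟨x, v.map (· - (a + 1)), length_x, ?_⟩
  have unshift : v.map ((· + (a + 1)) ∘ (· - (a + 1))) = v :=
    (List.map_congr_left fun k hk => Nat.sub_add_cancel (hv k hk)).trans v.map_id
  rw [glue, length_x, List.map_map, unshift]

lemma filter_length_lt_glue (hx : IsPermWord x) :
    (glue x y).filter (x.length < ·) = y.map (· + (x.length + 1)) := by
  rw [glue, List.filter_append, List.filter_eq_nil_iff.2, List.nil_append,
    List.filter_cons_of_neg (by simp), List.filter_eq_self.2]
  · grind
  · intro a ha
    simpa using (hx.mem_iff.1 ha).le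

lemma splitPoints_gt_filter_glue (hx : IsPermWord x) :
    splitPoints (· > ·) ((glue x y).filter (x.length < ·)) =
      (splitPoints (· > ·) y).image (· + (x.length + 1)) := by
  rw [filter_length_lt_glue hx, splitPoints_map (r := (· > ·)) (add_left_injective _) (by simp)]
  congr!

lemma mem_occurrences_glue (hx : IsPermWord x) {b : ℕ} (hb : b ∈ splitPoints (· > ·) y) :
    ⟨x.length, b + (x.length + 1)⟩ ∈ occurrences (glue x y) := by
  rw [mem_occurrences, splitPoints_gt_filter_glue hx]
  exact ⟨length_mem_splitPoints_glue hx, Finset.mem_image_of_mem _ hb⟩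

lemma card_occurrences_glue (hx : IsPermWord x) (hy : (splitPoints (· > ·) y).Nonempty) :
    (occurrences (glue x y)).card = (splitPoints (· > ·) y).card := by
  obtain ⟨b, hb⟩ := hy
  have unique (a : ℕ) (ha : a ∈ splitPoints (· < ·) (glue x y)) (hne : a ≠ x.length) :
      (splitPoints (· > ·) ((glue x y).filter (a < ·))).card = 0 := by
    refine Finset.card_eq_zero.2 (Finset.eq_empty_of_forall_notMem fun c hc => hne ?_)
    exact occurrence_fst_unique (mem_occurrences.2 ⟨ha, hc⟩) (mem_occurrences_glue hx hb)
  rw [occurrences, Finset.card_sigma,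
    Finset.sum_eq_single_of_mem _ (length_mem_splitPoints_glue hx) unique,
    splitPoints_gt_filter_glue hx, Finset.card_image_of_injective _ (add_left_injective _)]

lemma exists_eq_glue_of_occurrences_nonempty (hw : IsPermWord w) (h : (occurrences w).Nonempty) :
    ∃ x y, (splitPoints (· > ·) y).Nonempty ∧ w = glue x y := by
  obtain ⟨⟨a, b⟩, hab⟩ := h
  obtain ⟨ha, hb⟩ := mem_occurrences.1 hab
  obtain ⟨x, y, rfl, rfl⟩ := exists_eq_glue_of_mem_splitPoints hw ha
  rw [splitPoints_gt_filter_glue (isPermWord_glue.1 hw).1] at hb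
  exact ⟨x, y, Finset.image_nonempty.1 ⟨b, hb⟩, rfl⟩

lemma exists_eq_glue_of_splitPoints_nonempty (hw : IsPermWord w)
    (h : (splitPoints (· < ·) w).Nonempty) :
    ∃ x y, splitPoints (· < ·) y = ∅ ∧ w = glue x y := by
  obtain ⟨x, y, hxa, rfl⟩ := exists_eq_glue_of_mem_splitPoints hw (Finset.max'_mem _ h)
  refine ⟨x, y, Finset.eq_empty_of_forall_notMem fun b hb => ?_, rfl⟩
  have hb' : b + (x.length + 1) ∈ splitPoints (· < ·) (glue x y) := by
    simp [splitPoints_glue (isPermWord_glue.1 hw).1, hb]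
  have := Finset.le_max' _ _ hb'
  omega

end Glue

section GenFun

/-- The words of the permutations of `{0, …, n-1}`, as a finite set. -/
def permWords (n : ℕ) : Finset (List ℕ) := (List.range n).permutations.toFinset

lemma mem_permWords {n : ℕ} {w : List ℕ} : w ∈ permWords n ↔ IsPermWord w ∧ w.length = n := by
  rw [permWords, List.mem_toFinset, List.mem_permutations, IsPermWord]
  constructor
  · intro h
    have hn : w.length = n := by simpa using h.length_eq
    exact ⟨hn.symm ▸ h, hn⟩
  · rintro ⟨h, rfl⟩
    exact h

/-- The word of a permutation in one-line notation. -/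
def word {n : ℕ} (σ : Equiv.Perm (Fin n)) : List ℕ := List.ofFn fun i => (σ i : ℕ)

lemma injective_coe_perm {n : ℕ} (σ : Equiv.Perm (Fin n)) :
    Function.Injective fun i => (σ i : ℕ) :=
  Fin.val_injective.comp σ.injective

lemma word_injective {n : ℕ} : Function.Injective (word (n := n)) := fun _ _ h =>
  Equiv.ext fun i => Fin.ext (congrFun (List.ofFn_injective h) i)

lemma image_word (n : ℕ) : Finset.univ.image (word (n := n)) = permWords n := by
  refine Finset.eq_of_subset_of_card_le (fun w hw => ?_) ?_
  · obtain ⟨σ, -, rfl⟩ := Finset.mem_image.1 hw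
    rw [permWords, List.mem_toFinset, List.mem_permutations,
      ← List.map_coe_finRange_eq_range, ← List.ofFn_eq_map]
    exact σ.ofFn_comp_perm Fin.val
  · rw [Finset.card_image_of_injective _ word_injective, Finset.card_univ, Fintype.card_perm,
      Fintype.card_fin, permWords,
      List.toFinset_card_of_nodup (List.nodup_permutations _ List.nodup_range),
      List.length_permutations, List.length_range]

lemma isPermWord_word {n : ℕ} (σ : Equiv.Perm (Fin n)) : IsPermWord (word σ) := by
  have mem_image := Finset.mem_image_of_mem word (Finset.mem_univ σ)
  rw [image_word] at mem_image
  exact (mem_permWords.1 mem_image).1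

open Classical in
/-- The generating function of the permutation words in `S` by length, the word `w` carrying the
weight `f w`. Elements of `S` that are not permutation words are ignored. -/
noncomputable def genFun {R : Type*} [Semiring R] (S : Set (List ℕ)) (f : List ℕ → R) : R⟦X⟧ :=
  .mk fun n => ∑ w ∈ permWords n with w ∈ S, f w

variable {R : Type*} {S P Q : Set (List ℕ)}

section Semiring

variable [Semiring R] {f g : List ℕ → R}

open Classical in
lemma coeff_genFun (S : Set (List ℕ)) (f : List ℕ → R) (n : ℕ) :
    coeff n (genFun S f) = ∑ w ∈ permWords n with w ∈ S, f w := by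
  simp only [genFun, coeff_mk]

open Classical in
lemma coeff_genFun_eq_sum_perm (S : Set (List ℕ)) (f : List ℕ → R) (n : ℕ) :
    coeff n (genFun S f) =
      ∑ σ : Equiv.Perm (Fin n), if word σ ∈ S then f (word σ) else 0 := by
  rw [coeff_genFun, Finset.sum_filter, ← image_word, Finset.sum_image word_injective.injOn]

lemma genFun_congr (h : ∀ w ∈ S, f w = g w) : genFun S f = genFun S g := by
  classical
  ext n
  simp only [coeff_genFun]
  exact Finset.sum_congr rfl fun w hw => h w (Finset.mem_filter.1 hw).2

lemma genFun_inter_add_diff (S P : Set (List ℕ)) (f : List ℕ → R) :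
    genFun (S ∩ P) f + genFun (S \ P) f = genFun S f := by
  classical
  ext n
  simp only [map_add, coeff_genFun]
  rw [← Finset.sum_filter_add_sum_filter_not {w ∈ permWords n | w ∈ S} (· ∈ P),
    Finset.filter_filter, Finset.filter_filter]
  congr!

lemma genFun_preimage_reverse (S : Set (List ℕ)) (f : List ℕ → R) :
    genFun (List.reverse ⁻¹' S) (fun w => f w.reverse) = genFun S f := by
  classical
  ext n
  simp only [coeff_genFun]
  refine Finset.sum_nbij' List.reverse List.reverse ?_ ?_ ?_ ?_ ?_ <;>
    simp +contextual [mem_permWords, IsPermWord.reverse]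

lemma genFun_singleton {w : List ℕ} (hw : IsPermWord w) (f : List ℕ → R) :
    genFun {w} f = C (f w) * X ^ w.length := by
  classical
  ext n
  simp [coeff_genFun, coeff_X_pow, Finset.sum_filter, mem_permWords, hw, eq_comm]

open Classical in
lemma coeff_genFun_mul_genFun (P Q : Set (List ℕ)) (f g : List ℕ → R) (n : ℕ) :
    coeff n (genFun P f * genFun Q g) =
      ∑ s ∈ (Finset.HasAntidiagonal.antidiagonal n).sigma fun ij =>
        {x ∈ permWords ij.1 | x ∈ P} ×ˢ {y ∈ permWords ij.2 | y ∈ Q}, f s.2.1 * g s.2.2 := by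
  simp only [coeff_mul, coeff_genFun, Finset.sum_mul_sum, ← Finset.sum_product']
  rw [Finset.sum_sigma']

end Semiring

open Classical in
lemma bijOn_glue_permWords (hbij : Set.BijOn (fun p => glue p.1 p.2) (P ×ˢ Q) S) (n : ℕ) :
    Set.BijOn (fun s : Σ _ : ℕ × ℕ, List ℕ × List ℕ => glue s.2.1 s.2.2)
      ↑((Finset.HasAntidiagonal.antidiagonal n).sigma fun ij =>
        {x ∈ permWords ij.1 | x ∈ P} ×ˢ {y ∈ permWords ij.2 | y ∈ Q})
      ↑({w ∈ permWords (n + 1) | w ∈ S} : Finset (List ℕ)) := by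
  obtain ⟨mapsTo, injOn, surjOn⟩ := hbij
  simp only [Set.BijOn, Set.MapsTo, Set.InjOn, Set.SurjOn, Set.subset_def, Set.mem_image,
    Finset.mem_coe, Finset.mem_sigma, Finset.HasAntidiagonal.mem_antidiagonal,
    Finset.mem_product, Finset.mem_filter, mem_permWords, Sigma.forall, Prod.forall, Sigma.exists,
    Prod.exists]
  refine ⟨?_, ?_, ?_⟩
  · rintro i j x y ⟨rfl, ⟨⟨hx, rfl⟩, hxP⟩, ⟨hy, rfl⟩, hyQ⟩
    exact ⟨⟨isPermWord_glue.2 ⟨hx, hy⟩, length_glue⟩, mapsTo (Set.mk_mem_prod hxP hyQ)⟩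
  · rintro i j x y ⟨-, ⟨⟨-, rfl⟩, hxP⟩, ⟨-, rfl⟩, hyQ⟩ i' j' x' y'
      ⟨-, ⟨⟨-, rfl⟩, hxP'⟩, ⟨-, rfl⟩, hyQ'⟩ heq
    obtain ⟨rfl, rfl⟩ := Prod.ext_iff.1
      (injOn (Set.mk_mem_prod hxP hyQ) (Set.mk_mem_prod hxP' hyQ') heq)
    rfl
  · rintro w ⟨⟨hw, hwn⟩, hwS⟩
    obtain ⟨⟨x, y⟩, ⟨hxP, hyQ⟩, rfl⟩ := surjOn hwS
    obtain ⟨hx, hy⟩ := isPermWord_glue.1 hw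
    rw [length_glue, Nat.add_right_cancel_iff] at hwn
    exact ⟨x.length, y.length, x, y, ⟨hwn, ⟨⟨hx, rfl⟩, hxP⟩, ⟨hy, rfl⟩, hyQ⟩, rfl⟩

theorem genFun_glue [CommSemiring R] {f g h : List ℕ → R} (c : R)
    (hbij : Set.BijOn (fun p => glue p.1 p.2) (P ×ˢ Q) S)
    (hf : ∀ x ∈ P, ∀ y ∈ Q, f (glue x y) = c * (g x * h y)) :
    genFun S f = C c * X * (genFun P g * genFun Q h) := by
  classical
  rw [mul_assoc]
  ext (_ | n)
  · rw [coeff_C_mul, coeff_zero_X_mul, mul_zero, coeff_genFun]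
    refine Finset.sum_eq_zero fun w hw => ?_
    simp only [Finset.mem_filter, mem_permWords] at hw
    obtain ⟨⟨x, y⟩, -, rfl⟩ := hbij.surjOn hw.2
    simp at hw
  · rw [coeff_C_mul, coeff_succ_X_mul, coeff_genFun_mul_genFun, coeff_genFun, Finset.mul_sum]
    obtain ⟨mapsTo, injOn, surjOn⟩ := bijOn_glue_permWords hbij n
    refine (Finset.sum_nbij _ mapsTo injOn surjOn ?_).symm
    rintro ⟨⟨i, j⟩, x, y⟩ hs
    simp only [Finset.mem_sigma, Finset.mem_product, Finset.mem_filter] at hs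
    exact (hf x hs.2.1.2 y hs.2.2.2).symm

end GenFun

section Kings

/-- The words of the king permutations. -/
def kings : Set (List ℕ) := {w | IsPermWord w ∧ w.IsChain fun x y => x + 1 < y ∨ y + 1 < x}

/-- The words `x` for which `x ⊕ 1` is the word of a king permutation. -/
def extendableKings : Set (List ℕ) := {x | glue x [] ∈ kings}

variable {x y w : List ℕ}

lemma mem_kings :
    w ∈ kings ↔ IsPermWord w ∧ w.IsChain fun x y => x + 1 < y ∨ y + 1 < x := Iff.rfl

lemma isPermWord_of_mem_extendableKings (hx : x ∈ extendableKings) : IsPermWord x :=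
  (isPermWord_glue.1 hx.1).1

lemma extendableKings_subset_kings : extendableKings ⊆ kings := fun _ hx =>
  ⟨isPermWord_of_mem_extendableKings hx, hx.2.left_of_append⟩

lemma glue_mem_kings : glue x y ∈ kings ↔ x ∈ extendableKings ∧ glue [] y ∈ kings := by
  have isChain_shift : (x.length :: y.map (· + (x.length + 1))).IsChain
      (fun a b => a + 1 < b ∨ b + 1 < a) ↔
      (0 :: y.map (· + 1)).IsChain fun a b => a + 1 < b ∨ b + 1 < a := by
    have shift_eq :
        x.length :: y.map (· + (x.length + 1)) = (0 :: y.map (· + 1)).map (· + x.length) := by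
      simp [Function.comp_def, add_assoc, add_comm 1]
    rw [shift_eq, List.isChain_map]
    simp only [add_right_comm _ x.length 1, add_lt_add_iff_right]
  simp only [extendableKings, Set.mem_ofPred_eq, mem_kings, isPermWord_glue, isPermWord_nil]
  rw [glue, List.isChain_split, isChain_shift]
  simp only [glue, List.map_nil, List.nil_append, List.length_nil, zero_add]
  tauto

lemma nil_glue_mem_kings : glue [] y ∈ kings ↔ y ∈ kings ∧ y.head? ≠ some 0 := by
  rw [mem_kings, mem_kings, isPermWord_glue]
  simp only [isPermWord_nil, true_and, glue,
    List.nil_append, List.length_nil, zero_add, List.isChain_cons, List.isChain_map,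
    add_lt_add_iff_right]
  rcases y with _ | ⟨b, y⟩
  · simp
  · simp only [List.map_cons, List.head?_cons, Option.mem_def, ne_eq, Option.some.injEq]
    grind

lemma mem_extendableKings_iff (hx : x ∈ kings) :
    x ∈ extendableKings ↔ ∀ z, x ≠ glue z [] := by
  obtain ⟨perm_x, chain_x⟩ := hx
  rw [extendableKings, Set.mem_ofPred_eq, mem_kings, isPermWord_glue]
  rcases List.eq_nil_or_concat' x with rfl | ⟨z, b, rfl⟩
  · simp [glue, isPermWord_nil]
  · have : b < z.length + 1 := by simpa using perm_x.mem_iff (a := b)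
    have eq_glue_iff : (∃ z', z ++ [b] = glue z' []) ↔ b = z.length := by simp [glue]
    rw [← not_exists, eq_glue_iff, glue, List.map_nil, List.isChain_append, and_iff_right chain_x]
    simp only [perm_x, isPermWord_nil, List.isChain_singleton, List.getLast?_concat,
      List.head?_cons, Option.mem_some, List.length_append, List.length_singleton, true_and]
    grind

lemma reverse_mem_kings : w.reverse ∈ kings ↔ w ∈ kings := by
  have reverse_mem {v : List ℕ} (hv : v ∈ kings) : v.reverse ∈ kings :=
    ⟨hv.1.reverse, List.isChain_reverse.2 (hv.2.imp fun _ _ => Or.symm)⟩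
  exact ⟨fun h => w.reverse_reverse ▸ reverse_mem h, reverse_mem⟩

lemma nil_glue_mem_kings_of_splitPoints_eq_empty (hy : y ∈ kings)
    (h : splitPoints (· < ·) y = ∅) : glue [] y ∈ kings := by
  refine nil_glue_mem_kings.2 ⟨hy, fun h0 => ?_⟩
  obtain ⟨v, rfl⟩ := List.head?_eq_some_iff.1 h0
  exact Finset.notMem_empty 0 (h ▸ zero_mem_splitPoints_cons hy.1)

lemma nil_glue_mem_kings_iff_of_splitPoints_nonempty (hy : y ∈ kings)
    (h : (splitPoints (· > ·) y).Nonempty) : glue [] y ∈ kings ↔ y ≠ [0] := by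
  rw [nil_glue_mem_kings, and_iff_right hy, not_iff_not]
  refine ⟨fun h0 => ?_, fun h0 => by simp [h0]⟩
  obtain ⟨b, hb⟩ := h
  obtain ⟨v, rfl⟩ := List.head?_eq_some_iff.1 h0
  have eq_zero (c : ℕ) (hc : c ∈ v) : c = 0 :=
    eq_of_mem_splitPoints (fun _ _ => Nat.lt_asymm) (zero_mem_splitPoints_cons hy.1) hb
      (List.mem_cons_of_mem _ hc)
  have notMem_v : 0 ∉ v := (List.nodup_cons.1 hy.1.nodup).1
  rw [List.eq_nil_iff_forall_not_mem.2 fun c hc => notMem_v (eq_zero c hc ▸ hc)]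

end Kings

section KingGenFun

variable {R : Type*} [CommRing R] (u : R)

/-- The generating function of the king permutations by length and number of strong points. -/
noncomputable def strongGF : R⟦X⟧ := genFun kings fun w => u ^ (splitPoints (· < ·) w).card

/-- The generating function of the words `x` for which `x ⊕ 1` is a king permutation, by length and
number of strong points. -/
noncomputable def extendableGF : R⟦X⟧ :=
  genFun extendableKings fun x => u ^ (splitPoints (· < ·) x).card

variable (R) in
/-- The generating function of the king permutations without strong points. -/
noncomputable def strongFreeGF : R⟦X⟧ :=
  genFun (kings ∩ {w | splitPoints (· < ·) w = ∅}) 1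

/-- The words `y` with a skew strong point for which `1 ⊕ y` is a king permutation: the words that
an occurrence leaves above its lower letter. -/
def upperKings : Set (List ℕ) := {y | glue [] y ∈ kings ∧ (splitPoints (· > ·) y).Nonempty}

/-- The generating function of the words in `upperKings` by length and number of skew strong
points. -/
noncomputable def upperGF : R⟦X⟧ := genFun upperKings fun y => u ^ (splitPoints (· > ·) y).card

/-- The generating function of the king permutations by length and number of occurrences of the
mesh pattern Nr. 27. -/
noncomputable def occurrenceGF : R⟦X⟧ := genFun kings fun w => u ^ (occurrences w).card

variable (R) in
/-- The generating function of the king permutations avoiding the mesh pattern Nr. 27. -/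
noncomputable def avoiderGF : R⟦X⟧ := genFun (kings ∩ {w | occurrences w = ∅}) 1

lemma bijOn_glue_nil :
    Set.BijOn (fun p => glue p.1 p.2) (extendableKings ×ˢ {[]}) (kings \ extendableKings) := by
  refine ⟨?_, ?_, ?_⟩
  · rintro ⟨x, y⟩ ⟨hx, rfl⟩
    exact ⟨hx, fun h => (mem_extendableKings_iff hx).1 h x rfl⟩
  · rintro ⟨x, _⟩ ⟨-, rfl⟩ ⟨x', _⟩ ⟨-, rfl⟩ h
    have length_eq : x.length = x'.length := by simpa using congrArg List.length h
    exact Prod.ext_iff.2 (glue_inj h length_eq)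
  · rintro w ⟨hw, hw'⟩
    rw [mem_extendableKings_iff hw] at hw'
    push Not at hw'
    obtain ⟨z, rfl⟩ := hw'
    exact ⟨(z, []), ⟨hw, rfl⟩, rfl⟩

lemma bijOn_glue_strongFree :
    Set.BijOn (fun p => glue p.1 p.2)
      (extendableKings ×ˢ (kings ∩ {y | splitPoints (· < ·) y = ∅}))
      (kings \ {w | splitPoints (· < ·) w = ∅}) := by
  have length_le {x y x' y' : List ℕ} (hx : x ∈ extendableKings) (hx' : x' ∈ extendableKings)
      (hy' : splitPoints (· < ·) y' = ∅) (h : glue x y = glue x' y') :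
      x.length ≤ x'.length := by
    have := length_mem_splitPoints_glue (y := y) (isPermWord_of_mem_extendableKings hx)
    rw [h, splitPoints_glue_of_eq_empty (isPermWord_of_mem_extendableKings hx') hy',
      Finset.mem_insert] at this
    rcases this with h | h
    · exact h.le
    · exact (lt_length_of_mem_splitPoints (isPermWord_of_mem_extendableKings hx') h).le
  refine ⟨?_, ?_, ?_⟩
  · rintro ⟨x, y⟩ ⟨hx, hy, hy0⟩
    exact ⟨glue_mem_kings.2 ⟨hx, nil_glue_mem_kings_of_splitPoints_eq_empty hy hy0⟩,
      Finset.ne_empty_of_mem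
        (length_mem_splitPoints_glue (isPermWord_of_mem_extendableKings hx))⟩
  · rintro ⟨x, y⟩ ⟨hx, -, hy⟩ ⟨x', y'⟩ ⟨hx', -, hy'⟩ h
    exact Prod.ext_iff.2
      (glue_inj h ((length_le hx hx' hy' h).antisymm (length_le hx' hx hy h.symm)))
  · rintro w ⟨hw, hw0⟩
    obtain ⟨x, y, hy, rfl⟩ :=
      exists_eq_glue_of_splitPoints_nonempty hw.1 (Finset.nonempty_iff_ne_empty.2 hw0)
    obtain ⟨hx, hy'⟩ := glue_mem_kings.1 hw
    exact ⟨(x, y), ⟨hx, (nil_glue_mem_kings.1 hy').1, hy⟩, rfl⟩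

lemma bijOn_glue_upperKings :
    Set.BijOn (fun p => glue p.1 p.2) (extendableKings ×ˢ upperKings)
      (kings \ {w | occurrences w = ∅}) := by
  refine ⟨?_, ?_, ?_⟩
  · rintro ⟨x, y⟩ ⟨hx, hy, b, hb⟩
    exact ⟨glue_mem_kings.2 ⟨hx, hy⟩, Finset.ne_empty_of_mem
      (mem_occurrences_glue (isPermWord_of_mem_extendableKings hx) hb)⟩
  · rintro ⟨x, y⟩ ⟨hx, -, b, hb⟩ ⟨x', y'⟩ ⟨hx', -, b', hb'⟩ h
    change glue x y = glue x' y' at h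
    have occ := mem_occurrences_glue (isPermWord_of_mem_extendableKings hx) hb
    have occ' := mem_occurrences_glue (isPermWord_of_mem_extendableKings hx') hb'
    exact Prod.ext_iff.2 (glue_inj h (occurrence_fst_unique occ (h ▸ occ')))
  · rintro w ⟨hw, hw0⟩
    obtain ⟨x, y, hy, rfl⟩ :=
      exists_eq_glue_of_occurrences_nonempty hw.1 (Finset.nonempty_iff_ne_empty.2 hw0)
    obtain ⟨hx, hy'⟩ := glue_mem_kings.1 hw
    exact ⟨(x, y), ⟨hx, hy', hy⟩, rfl⟩

lemma strongGF_eq_mul_extendableGF : strongGF u = (1 + C u * X) * extendableGF u := by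
  have genFun_nil : genFun {[]} (fun _ => (1 : R)) = 1 := by
    rw [genFun_singleton isPermWord_nil, List.length_nil, map_one, pow_zero, mul_one]
  have glued : genFun (kings \ extendableKings) (fun w => u ^ (splitPoints (· < ·) w).card) =
      C u * X * (extendableGF u * genFun {[]} fun _ => (1 : R)) := by
    refine genFun_glue u bijOn_glue_nil ?_
    rintro x hx _ rfl
    rw [card_splitPoints_glue_of_eq_empty (isPermWord_of_mem_extendableKings hx) splitPoints_nil,
      pow_succ', mul_one]
  rw [strongGF, ← genFun_inter_add_diff kings extendableKings,
    Set.inter_eq_right.2 extendableKings_subset_kings, glued, genFun_nil, ← extendableGF]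
  ring

lemma strongGF_eq_strongFreeGF_add :
    strongGF u = strongFreeGF R + C u * X * (extendableGF u * strongFreeGF R) := by
  have glued : genFun (kings \ {w | splitPoints (· < ·) w = ∅})
      (fun w => u ^ (splitPoints (· < ·) w).card) =
      C u * X * (extendableGF u * strongFreeGF R) := by
    refine genFun_glue u bijOn_glue_strongFree ?_
    rintro x hx y ⟨-, hy⟩
    rw [card_splitPoints_glue_of_eq_empty (isPermWord_of_mem_extendableKings hx) hy, pow_succ',
      Pi.one_apply, mul_one]
  rw [strongGF, ← genFun_inter_add_diff kings {w | splitPoints (· < ·) w = ∅}, glued,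
    genFun_congr (g := 1) (by simp +contextual), ← strongFreeGF]

lemma splitPoints_gt_reverse (w : List ℕ) :
    splitPoints (· > ·) w.reverse = splitPoints (· < ·) w :=
  splitPoints_reverse

lemma genFun_kings_diff_eq_upperGF_add :
    genFun (kings \ {w | splitPoints (· > ·) w = ∅})
      (fun w => u ^ (splitPoints (· > ·) w).card) = upperGF u + C u * X := by
  have isPermWord_zero : IsPermWord [0] := .refl _
  have singleton_eq : (kings \ {w | splitPoints (· > ·) w = ∅}) ∩ {[0]} = {[0]} := by
    refine Set.inter_eq_right.2 (Set.singleton_subset_iff.2 ⟨⟨isPermWord_zero, .singleton _⟩, ?_⟩)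
    simp
  have diff_eq : (kings \ {w | splitPoints (· > ·) w = ∅}) \ {[0]} = upperKings := by
    ext y
    simp only [upperKings, Set.mem_sdiff, Set.mem_ofPred_eq, Set.mem_singleton_iff,
      ← Finset.nonempty_iff_ne_empty]
    constructor
    · rintro ⟨⟨hy, h⟩, hne⟩
      exact ⟨(nil_glue_mem_kings_iff_of_splitPoints_nonempty hy h).2 hne, h⟩
    · rintro ⟨hy', h⟩
      have hy := (nil_glue_mem_kings.1 hy').1
      exact ⟨⟨hy, h⟩, (nil_glue_mem_kings_iff_of_splitPoints_nonempty hy h).1 hy'⟩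
  rw [← genFun_inter_add_diff _ {[0]}, singleton_eq, diff_eq, ← upperGF, add_comm,
    genFun_singleton isPermWord_zero, splitPoints_singleton, Finset.card_singleton,
    List.length_singleton, pow_one, pow_one]

lemma strongGF_eq_upperGF_add : strongGF u = strongFreeGF R + upperGF u + C u * X := by
  have reverse_kings : List.reverse ⁻¹' kings = kings := Set.ext fun _ => reverse_mem_kings
  have skewGF : genFun kings (fun w => u ^ (splitPoints (· > ·) w).card) = strongGF u := by
    rw [← genFun_preimage_reverse, reverse_kings]
    simp only [splitPoints_gt_reverse, strongGF]
  have skewFreeGF : genFun (kings ∩ {w | splitPoints (· > ·) w = ∅}) 1 = strongFreeGF R := by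
    rw [← genFun_preimage_reverse, Set.preimage_inter, reverse_kings, Set.preimage_ofPred_eq]
    simp only [splitPoints_gt_reverse, strongFreeGF]
    rfl
  rw [← skewGF, ← genFun_inter_add_diff kings {w | splitPoints (· > ·) w = ∅},
    genFun_congr (g := 1) (by simp +contextual), skewFreeGF,
    genFun_kings_diff_eq_upperGF_add, add_assoc]

lemma occurrenceGF_eq_avoiderGF_add :
    occurrenceGF u = avoiderGF R + X * (extendableGF 1 * upperGF u) := by
  have glued : genFun (kings \ {w | occurrences w = ∅}) (fun w => u ^ (occurrences w).card) =
      C 1 * X * (extendableGF 1 * upperGF u) := by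
    refine genFun_glue 1 bijOn_glue_upperKings ?_
    rintro x hx y ⟨-, hy⟩
    rw [card_occurrences_glue (isPermWord_of_mem_extendableKings hx) hy, one_pow, one_mul, one_mul]
  rw [occurrenceGF, ← genFun_inter_add_diff kings {w | occurrences w = ∅}, glued, map_one, one_mul,
    genFun_congr (g := 1) (by simp +contextual), ← avoiderGF]

lemma occurrenceGF_one : occurrenceGF (1 : R) = strongGF 1 := by
  simp only [occurrenceGF, strongGF, one_pow]

theorem mul_strongGF :
    ((1 + X) * (1 + C u * X) + X * (1 - C u) * strongGF 1) * strongGF u =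
      (1 + X) * (1 + C u * X) * strongGF 1 := by
  have h := strongGF_eq_mul_extendableGF u
  have h1 := strongGF_eq_mul_extendableGF (1 : R)
  have k := strongGF_eq_strongFreeGF_add u
  have k1 := strongGF_eq_strongFreeGF_add (1 : R)
  rw [map_one] at h1 k1
  linear_combination (1 + X) * (1 + C u * X) *
      ((1 + X * extendableGF 1) * k - (1 + C u * X * extendableGF u) * k1) +
    X * (1 + C u * X) * strongGF u * h1 - C u * X * (1 + X) * strongGF 1 * h

theorem mul_occurrenceGF_sub :
    (1 + X) * (occurrenceGF u - strongGF 1) =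
      X * strongGF 1 * (strongGF u - strongGF 1 - (C u - 1) * X) := by
  have h1 := strongGF_eq_mul_extendableGF (1 : R)
  have k := strongGF_eq_upperGF_add u
  have k1 := strongGF_eq_upperGF_add (1 : R)
  have e := occurrenceGF_eq_avoiderGF_add u
  have e1 := occurrenceGF_eq_avoiderGF_add (1 : R)
  rw [occurrenceGF_one] at e1
  rw [map_one] at h1 k1
  linear_combination (1 + X) * (e - e1) - X * strongGF 1 * (k - k1) -
    X * (upperGF u - upperGF 1) * h1

theorem mul_occurrenceGF :
    (1 + X) * (1 + X * (1 + C u + C u * X) + X * (1 - C u) * strongGF 1) * occurrenceGF u =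
      ((1 + X) * (1 + X * (1 + C u + C u * X) + X * (1 - C u) * strongGF 1) +
        X ^ 2 * (1 - C u) *
          ((1 + X * (1 + C u + C u * X) + X * (1 - C u) * strongGF 1) - strongGF 1 ^ 2)) *
        strongGF 1 := by
  linear_combination
    (1 + X * (1 + C u + C u * X) + X * (1 - C u) * strongGF 1) * mul_occurrenceGF_sub u +
      X * strongGF 1 * mul_strongGF u

end KingGenFun

section Transfer

variable {n : ℕ} {σ : Equiv.Perm (Fin n)}

lemma word_mem_kings_iff : word σ ∈ kings ↔ IsKing σ := by
  rw [mem_kings, and_iff_right (isPermWord_word σ), word, List.isChain_ofFn, IsKing]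
  simp only [lt_abs]
  constructor
  · intro h i hi
    have := h i hi
    grind
  · intro h i hi
    have := h ⟨i, by omega⟩ hi
    grind

lemma occP_iff_mem_occurrences {i j : Fin n} :
    OccP σ i j ↔ ⟨(σ i : ℕ), (σ j : ℕ)⟩ ∈ occurrences (word σ) := by
  rw [mem_occurrences, word, mem_splitPoints_ofFn (injective_coe_perm σ) i,
    mem_splitPoints_filter_ofFn (injective_coe_perm σ) _ j]
  simp only [OccP, decide_eq_true_eq, Fin.val_fin_lt, gt_iff_lt]
  constructor
  · rintro ⟨hij, hσ, before, between, after⟩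
    refine ⟨⟨before, fun k hik => ?_⟩, hσ, fun k hkj hk => ?_, fun k hjk _ => (after k hjk).2⟩
    · rcases lt_trichotomy k j with hkj | rfl | hjk
      · exact hσ.trans (between k hik hkj)
      · exact hσ
      · exact (after k hjk).1
    · rcases lt_trichotomy i k with hik | rfl | hki
      · exact between k hik hkj
      · exact absurd hk (lt_irrefl _)
      · exact absurd hk (before k hki).asymm
  · rintro ⟨⟨before, above⟩, hσ, left, right⟩
    have hij : i < j := by
      rcases lt_trichotomy i j with h | rfl | h
      · exact h
      · exact absurd hσ (lt_irrefl _)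
      · exact absurd hσ (before j h).asymm
    exact ⟨hij, hσ, before, fun k hik hkj => left k hkj (above k hik), fun k hjk =>
      ⟨above k (hij.trans hjk), right k hjk (above k (hij.trans hjk))⟩⟩

lemma occP_eq_card_occurrences (σ : Equiv.Perm (Fin n)) :
    occP σ = (occurrences (word σ)).card := by
  rw [occP, ← Nat.card_eq_finsetCard]
  refine Nat.card_congr (Equiv.ofBijective
    (fun p => ⟨⟨σ p.1.1, σ p.1.2⟩, occP_iff_mem_occurrences.1 p.2⟩) ⟨?_, ?_⟩)
  · rintro ⟨⟨i, j⟩, h⟩ ⟨⟨i', j'⟩, h'⟩ heq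
    simp only [Subtype.mk.injEq, Sigma.mk.injEq, Fin.val_inj, EmbeddingLike.apply_eq_iff_eq,
      heq_eq_eq] at heq
    simp only [heq]
  · rintro ⟨⟨a, b⟩, h⟩
    obtain ⟨ha, hb⟩ := mem_occurrences.1 h
    obtain ⟨i, rfl⟩ := List.mem_ofFn.1 (mem_splitPoints.1 ha).1
    obtain ⟨j, rfl⟩ := List.mem_ofFn.1 (List.mem_of_mem_filter (mem_splitPoints.1 hb).1)
    exact ⟨⟨(i, j), occP_iff_mem_occurrences.2 h⟩, rfl⟩

end Transfer

/-- `A(t)` as a power series over `R`. -/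
noncomputable def kingGF (R : Type*) [CommRing R] : R⟦X⟧ := .mk fun n => (kingCount n : R)

open Classical in
/-- `E(t, u)` as a power series over `R`, for `u` in `R`. -/
noncomputable def occPGF {R : Type*} [CommRing R] (u : R) : R⟦X⟧ :=
  .mk fun n => ∑ σ : Equiv.Perm (Fin n), if IsKing σ then u ^ occP σ else 0

lemma occPGF_eq_occurrenceGF {R : Type*} [CommRing R] (u : R) :
    occPGF u = occurrenceGF u := by
  classical
  ext n
  simp only [occPGF, occurrenceGF, coeff_mk, coeff_genFun_eq_sum_perm, word_mem_kings_iff,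
    occP_eq_card_occurrences]

lemma kingGF_eq_strongGF (R : Type*) [CommRing R] : kingGF R = strongGF 1 := by
  classical
  ext n
  simp only [kingGF, strongGF, coeff_mk, coeff_genFun_eq_sum_perm, word_mem_kings_iff, one_pow,
    Finset.sum_boole, kingCount, Nat.card_eq_fintype_card, Fintype.card_subtype]

theorem statement_14_general {R : Type*} [CommRing R] (u : R) :
    (1 + X) * (1 + X * (1 + C u + C u * X) + X * (1 - C u) * kingGF R) * occPGF u =
      ((1 + X) * (1 + X * (1 + C u + C u * X) + X * (1 - C u) * kingGF R) +
        X ^ 2 * (1 - C u) *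
          ((1 + X * (1 + C u + C u * X) + X * (1 - C u) * kingGF R) - kingGF R ^ 2)) *
        kingGF R := by
  rw [occPGF_eq_occurrenceGF, kingGF_eq_strongGF]
  exact mul_occurrenceGF u

theorem statement_14 :
    (1 + T) * (1 + T * (1 + U + U * T) + T * (1 - U) * kingAu) * Etu
      = ((1 + T) * (1 + T * (1 + U + U * T) + T * (1 - U) * kingAu)
          + T ^ 2 * (1 - U)
            * ((1 + T * (1 + U + U * T) + T * (1 - U) * kingAu) - kingAu ^ 2))
          * kingAu :=
  statement_14_general Polynomial.X
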